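/- Let n ≥ 0 and let 𝒦₁, 𝒦₂ be simplicial complexes over S all of whose faces have cardinality at most n+1. If 𝒦₁ ≠ 𝒦₂ then d(𝒦₁, 𝒦₂) ≥ 1/(n+1). In particular, the collection 𝒮ₙ of simplicial complexes of dimension at most n is a uniformly discrete subset for the distance d. -/

import Mathlib

open scoped BigOperators

/-- A simplicial complex over the vertex set `S`: a nonempty collection of
nonempty finite subsets of `S`, closed under taking nonempty subsets. -/
def IsSimplicialComplex {S : Type*} (K : Set (Finset S)) : Prop :=
  K.Nonempty ∧ (∀ F ∈ K, F.Nonempty) ∧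
    ∀ F ∈ K, ∀ G : Finset S, G.Nonempty → G ⊆ F → G ∈ K

/-- Halved ℓ¹ distance between finitely supported real functions:
`d(α,β) = (1/2) ∑ₛ |α s - β s|`. -/
noncomputable def l1dist {S : Type*} (α β : S →₀ ℝ) : ℝ :=
  (1 / 2) * (α - β).sum fun _ x => |x|

/-- The ℓ¹ geometric realization of a collection `K` of finite subsets of `S`:
finitely supported probability vectors whose support is a face of `K`. -/
def realization {S : Type*} (K : Set (Finset S)) : Set (S →₀ ℝ) :=
  {α | (∀ s, 0 ≤ α s) ∧ (α.sum fun _ x => x) = 1 ∧ α.support ∈ K}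

/-- Distance from a point to a set of finitely supported functions. -/
noncomputable def distToSet {S : Type*} (α : S →₀ ℝ) (X : Set (S →₀ ℝ)) : ℝ :=
  sInf (l1dist α '' X)

/-- One-sided Hausdorff distance between (the realizations of) two complexes. -/
noncomputable def hdelta {S : Type*} (K₁ K₂ : Set (Finset S)) : ℝ :=
  sSup ((fun α => distToSet α (realization K₂)) '' realization K₁)

/-- Hausdorff distance between (the realizations of) two simplicial complexes. -/
noncomputable def hdist {S : Type*} (K₁ K₂ : Set (Finset S)) : ℝ :=
  max (hdelta K₁ K₂) (hdelta K₂ K₁)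

/-- `d(F, K)`: supremum of distances to `|K|₁` over probability vectors
supported exactly on `F`. -/
noncomputable def dFace {S : Type*} (F : Finset S) (K : Set (Finset S)) : ℝ :=
  sSup ((fun α => distToSet α (realization K)) ''
    {α : S →₀ ℝ | (∀ s, 0 ≤ α s) ∧ (α.sum fun _ x => x) = 1 ∧ α.support = F})

/-- The `n`-skeleton of a simplicial complex. -/
def skeleton {S : Type*} (n : ℕ) (K : Set (Finset S)) : Set (Finset S) :=
  {F | F ∈ K ∧ F.card ≤ n + 1}

theorem aux_l1dist_eq {S : Type*} [DecidableEq S] (α β : S →₀ ℝ) :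
    l1dist α β = (1 / 2) * ∑ s ∈ α.support ∪ β.support, |α s - β s| := by
  unfold l1dist
  rw [Finsupp.sum_of_support_subset (α - β) Finsupp.support_sub _ (by simp)]
  simp

theorem aux_l1dist_nonneg {S : Type*} (α β : S →₀ ℝ) : 0 ≤ l1dist α β := by
  classical
  rw [aux_l1dist_eq]
  exact mul_nonneg (by norm_num) (Finset.sum_nonneg fun _ _ => abs_nonneg _)

theorem aux_sums {S : Type*} [DecidableEq S] {α β : S →₀ ℝ}
    (ha : (α.sum fun _ x => x) = 1) (hb : (β.sum fun _ x => x) = 1) :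
    ∑ s ∈ α.support ∪ β.support, α s = 1 ∧ ∑ s ∈ α.support ∪ β.support, β s = 1 := by
  constructor
  · rw [← ha, Finsupp.sum_of_support_subset α Finset.subset_union_left _ (by simp)]
  · rw [← hb, Finsupp.sum_of_support_subset β Finset.subset_union_right _ (by simp)]

theorem aux_l1dist_le_one {S : Type*} {K L : Set (Finset S)} {α β : S →₀ ℝ}
    (ha : α ∈ realization K) (hb : β ∈ realization L) : l1dist α β ≤ 1 := by
  classical
  rw [aux_l1dist_eq]
  obtain ⟨h1, h2⟩ := aux_sums ha.2.1 hb.2.1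
  have h : ∑ s ∈ α.support ∪ β.support, |α s - β s|
      ≤ ∑ s ∈ α.support ∪ β.support, (α s + β s) := by
    refine Finset.sum_le_sum fun s _ => ?_
    have := ha.1 s
    have := hb.1 s
    rw [abs_le]
    constructor <;> linarith
  rw [Finset.sum_add_distrib, h1, h2] at h
  linarith

theorem aux_le_l1dist {S : Type*} {α β : S →₀ ℝ}
    (ha : (α.sum fun _ x => x) = 1) (hb : (β.sum fun _ x => x) = 1)
    (s : S) (hs : s ∈ α.support) : |α s - β s| ≤ l1dist α β := by
  classical
  rw [aux_l1dist_eq]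
  obtain ⟨h1, h2⟩ := aux_sums ha hb
  have hs' : s ∈ α.support ∪ β.support := Finset.mem_union_left _ hs
  have h0 : ∑ t ∈ α.support ∪ β.support, (α t - β t) = 0 := by
    rw [Finset.sum_sub_distrib, h1, h2, sub_self]
  rw [← Finset.add_sum_erase _ _ hs'] at h0 ⊢
  have h3 := Finset.abs_sum_le_sum_abs (fun t => α t - β t) ((α.support ∪ β.support).erase s)
  have h4 : |α s - β s| = |∑ t ∈ (α.support ∪ β.support).erase s, (α t - β t)| := by
    rw [← abs_neg]
    congr 1
    linarith
  linarith

/-- The uniform probability vector on a nonempty finite set. -/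
theorem aux_uniform {S : Type*} {F : Finset S} (hF : F.Nonempty) :
    ∃ α : S →₀ ℝ, (∀ s, 0 ≤ α s) ∧ (α.sum fun _ x => x) = 1 ∧ α.support = F ∧
      ∀ s ∈ F, α s = 1 / (F.card : ℝ) := by
  classical
  have hc : (F.card : ℝ) ≠ 0 := by exact_mod_cast hF.card_pos.ne'
  refine ⟨Finsupp.indicator F fun _ _ => 1 / (F.card : ℝ), ?_, ?_, ?_, ?_⟩
  · intro s
    rw [Finsupp.indicator_apply]
    split_ifs <;> positivity
  · rw [Finsupp.sum_of_support_subset _ (Finsupp.support_indicator_subset _ _) _ (by simp),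
      Finset.sum_congr rfl (g := fun _ => 1 / (F.card : ℝ))]
    · simp [hc]
    · intro s hs
      simp [Finsupp.indicator_apply, hs]
  · ext s
    simp [Finsupp.indicator_apply, hF.ne_empty]
  · intro s hs
    simp [Finsupp.indicator_apply, hs]

theorem aux_hdelta {S : Type*} (n : ℕ) (K L : Set (Finset S))
    (h1 : IsSimplicialComplex K) (h2 : IsSimplicialComplex L)
    (hd : ∀ F ∈ K, F.card ≤ n + 1) (F : Finset S) (hF : F ∈ K) (hFL : F ∉ L) :
    1 / ((n : ℝ) + 1) ≤ hdelta K L := by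
  have hFne := h1.2.1 F hF
  obtain ⟨G, hG⟩ := h2.1
  obtain ⟨β₀, b1, b2, b3, -⟩ := aux_uniform (h2.2.1 G hG)
  have hβ₀ : β₀ ∈ realization L := ⟨b1, b2, by rwa [b3]⟩
  obtain ⟨α, a1, a2, a3, a4⟩ := aux_uniform hFne
  have hα : α ∈ realization K := ⟨a1, a2, by rwa [a3]⟩
  have hle : 1 / ((n : ℝ) + 1) ≤ distToSet α (realization L) := by
    refine le_csInf ⟨_, β₀, hβ₀, rfl⟩ ?_
    rintro _ ⟨β, hβ, rfl⟩
    have hns : ¬ F ⊆ β.support := fun h => hFL (h2.2.2 _ hβ.2.2 F hFne h)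
    obtain ⟨s, hsF, hsβ⟩ := Finset.not_subset.mp hns
    have h := aux_le_l1dist a2 hβ.2.1 s (a3 ▸ hsF)
    rw [Finsupp.notMem_support_iff.mp hsβ, a4 s hsF, sub_zero, abs_of_nonneg (by positivity)] at h
    refine le_trans ?_ h
    have hc : (0 : ℝ) < F.card := by exact_mod_cast hFne.card_pos
    refine one_div_le_one_div_of_le hc ?_
    exact_mod_cast hd F hF
  refine hle.trans (le_csSup ⟨1, ?_⟩ ⟨α, hα, rfl⟩)
  rintro _ ⟨γ, hγ, rfl⟩
  have hmem : l1dist γ β₀ ∈ l1dist γ '' realization L := ⟨β₀, hβ₀, rfl⟩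
  refine (csInf_le ⟨0, ?_⟩ hmem).trans (aux_l1dist_le_one hγ hβ₀)
  rintro _ ⟨δ, -, rfl⟩
  exact aux_l1dist_nonneg _ _

/-- Two distinct simplicial complexes of dimension at most `n` are at Hausdorff
distance at least `1/(n+1)`; in particular `𝒮ₙ` is uniformly discrete. -/
theorem stmt13 {S : Type*} (n : ℕ) (K₁ K₂ : Set (Finset S))
    (h1 : IsSimplicialComplex K₁) (h2 : IsSimplicialComplex K₂)
    (hd1 : ∀ F ∈ K₁, F.card ≤ n + 1) (hd2 : ∀ F ∈ K₂, F.card ≤ n + 1)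
    (hne : K₁ ≠ K₂) :
    1 / ((n : ℝ) + 1) ≤ hdist K₁ K₂ := by
  by_cases h : K₁ ⊆ K₂
  · have h' : ¬ K₂ ⊆ K₁ := fun h' => hne (Set.Subset.antisymm h h')
    obtain ⟨F, hF, hF'⟩ := Set.not_subset.mp h'
    exact (aux_hdelta n K₂ K₁ h2 h1 hd2 F hF hF').trans (le_max_right _ _)
  · obtain ⟨F, hF, hF'⟩ := Set.not_subset.mp h
    exact (aux_hdelta n K₁ K₂ h1 h2 hd1 F hF hF').trans (le_max_left _ _)
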